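/- arXiv:1507.03755 — 6 statements merged into one kernel-verified Lean document; each statement's English description precedes it below -/
import Mathlib

section
/- Let X and Y be real Banach spaces, let N : X → Y be any map, let L : X → Y be a continuous linear map, let J : Y → X be a map satisfying L(J(y)) = y for all y ∈ Y, and let c₀ be a nonzero real number. Suppose u : ℕ → X, δ : ℕ → Y and p : ℕ → X are sequences such that L(pₖ) = 0 for every k ≥ 1 and uₖ = χₖ·u_{k−1} + c₀·J(δ_{k−1}) + pₖ for every k ≥ 1. If uₖ → 0 as k → ∞, and S ∈ X is such that the partial sums ∑_{n=0}^{m−1} δₙ converge to N(S) as m → ∞, then N(S) = 0. -/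
/-!
Applying `L` to the recursion gives `L uₖ = χₖ • L uₖ₋₁ + c₀ • δₖ₋₁` for `k ≥ 1`, which telescopes
to `L uₘ = c₀ • ∑_{n < m} δₙ` for `m ≥ 1`. As `m → ∞` the left side tends to `L 0 = 0` by
continuity, and the right side to `c₀ • N S`; since `c₀ ≠ 0`, this forces `N S = 0`.
-/

open Filter Topology

/-- χ : the sequence with χₖ = 0 for k ≤ 1 and χₖ = 1 for k > 1. -/
noncomputable def chi (k : ℕ) : ℝ := if k ≤ 1 then 0 else 1

theorem mddim_convergence_governing_equation
    {X Y : Type*} [NormedAddCommGroup X] [NormedSpace ℝ X] [CompleteSpace X]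
    [NormedAddCommGroup Y] [NormedSpace ℝ Y] [CompleteSpace Y]
    (N : X → Y) (L : X →L[ℝ] Y) (J : Y → X) (c₀ : ℝ) (hc₀ : c₀ ≠ 0)
    (hJ : ∀ y : Y, L (J y) = y)
    (u : ℕ → X) (δ : ℕ → Y) (p : ℕ → X)
    (hp : ∀ k : ℕ, 1 ≤ k → L (p k) = 0)
    (hu : ∀ k : ℕ, 1 ≤ k →
      u k = chi k • u (k - 1) + c₀ • J (δ (k - 1)) + p k)
    (hlim : Tendsto u atTop (𝓝 0))
    (S : X)
    (hsum : Tendsto (fun m => ∑ n ∈ Finset.range m, δ n) atTop (𝓝 (N S))) :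
    N S = 0 := by
  -- Applying `L` to the recursion kills `p` and inverts `J`; as `χ₁ = 0`, the result telescopes.
  have key : ∀ m : ℕ, L (u (m + 1)) = c₀ • ∑ n ∈ Finset.range (m + 1), δ n := by
    intro m
    induction m with
    | zero => rw [hu 1 le_rfl]; simp [chi, hJ, hp 1 le_rfl]
    | succ m ih =>
      rw [hu (m + 1 + 1) (by omega), Finset.sum_range_succ, smul_add, ← ih]
      simp [chi, hJ, hp (m + 1 + 1) (by omega)]
  have hL : Tendsto (fun m => L (u (m + 1))) atTop (𝓝 0) := by
    simpa [Function.comp_def] using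
      (L.continuous.tendsto 0).comp (hlim.comp (tendsto_add_atTop_nat 1))
  have hR : Tendsto (fun m => L (u (m + 1))) atTop (𝓝 (c₀ • N S)) := by
    simp only [key]
    exact (hsum.comp (tendsto_add_atTop_nat 1)).const_smul c₀
  exact (smul_eq_zero.mp (tendsto_nhds_unique hR hL)).resolve_left hc₀
end

section
/- Let X be a real normed space, B : X → ℝ a continuous linear map, β a real number, and c a nonzero real number. Suppose u : ℕ → X satisfies B(uₖ − χₖ·u_{k−1}) = c·(B(u_{k−1}) − (1 − χₖ)·β) for every k ≥ 1, and suppose the series ∑_{n=0}^{∞} uₙ has sum S (in the sense of HasSum). Then B(S) = β. -/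
theorem mddim_boundary_condition_of_sum
    {X : Type*} [NormedAddCommGroup X] [NormedSpace ℝ X]
    (B : X →L[ℝ] ℝ) (β c : ℝ) (hc : c ≠ 0) (u : ℕ → X)
    (h : ∀ k : ℕ, 1 ≤ k →
      B (u k - chi k • u (k - 1)) = c * (B (u (k - 1)) - (1 - chi k) * β))
    (S : X) (hS : HasSum u S) :
    B S = β := by
  have hB : HasSum (fun n => B (u n)) (B S) := B.hasSum hS
  have telescope : ∀ n : ℕ,
      B (u (n + 1)) = c * (∑ i ∈ Finset.range (n + 1), B (u i) - β) := by
    intro n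
    induction n with
    | zero => simpa [chi] using h 1 le_rfl
    | succ n ih =>
      have hk := h (n + 2) (by omega)
      simp [chi] at hk
      rw [Finset.sum_range_succ]
      linear_combination hk + ih
  have hleft : Filter.Tendsto (fun n => B (u (n + 1))) Filter.atTop (nhds 0) :=
    (Filter.tendsto_add_atTop_iff_nat 1).2 hB.summable.tendsto_atTop_zero
  have hright : Filter.Tendsto (fun n => B (u (n + 1))) Filter.atTop
      (nhds (c * (B S - β))) := by
    simp only [telescope]
    exact (((Filter.tendsto_add_atTop_iff_nat 1).2 hB.tendsto_sum_nat).sub_const β).const_mul c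
  have hzero : c * (B S - β) = 0 := tendsto_nhds_unique hright hleft
  exact sub_eq_zero.1 ((mul_eq_zero.1 hzero).resolve_left hc)
end

section
/- Let X be a real vector space, B : X → ℝ a linear map, β a real number, and c a real number. Suppose u : ℕ → X satisfies B(uₖ − χₖ·u_{k−1}) = c·(B(u_{k−1}) − (1 − χₖ)·β) for every k ≥ 1. Then for every m ≥ 1 one has B(u_m) = c·(∑_{n=0}^{m−1} B(uₙ) − β). -/
theorem mddim_boundary_telescoping_identity
    {X : Type*} [AddCommGroup X] [Module ℝ X]
    (B : X →ₗ[ℝ] ℝ) (β c : ℝ) (u : ℕ → X)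
    (h : ∀ k : ℕ, 1 ≤ k →
      B (u k - chi k • u (k - 1)) = c * (B (u (k - 1)) - (1 - chi k) * β)) :
    ∀ m : ℕ, 1 ≤ m → B (u m) = c * ((∑ n ∈ Finset.range m, B (u n)) - β) := by
  intro m hm
  induction m, hm using Nat.le_induction with
  | base => simpa [chi] using h 1 le_rfl
  | succ k hk ih =>
    have hchi : chi (k + 1) = 1 := if_neg (by omega)
    have hstep := h (k + 1) (by omega)
    rw [hchi, Nat.add_sub_cancel, one_smul, map_sub] at hstep
    rw [Finset.sum_range_succ]
    linear_combination hstep + ih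
end

section
/- Let φ : ℝ → ℝ be analytic at 0 and let α be a real number. Set uₖ := 𝒟ₖ(φ) and Eₖ := 𝒟ₖ(q ↦ exp(α·φ(q))). Then E₀ = exp(α·φ(0)), and for every integer m ≥ 1, E_m = α·∑_{k=0}^{m−1} (1 − k/m)·u_{m−k}·Eₖ. -/
/-!
Near `0` the function `E = exp (α φ)` satisfies the linear differential equation
`E' = α • (E * φ')`. Applying the Leibniz rule to the `n`-th derivative of the right-hand side
at `0`, and dividing by `(n + 1)!`, gives the recursion for `m = n + 1`, since
`(n.choose k) / (n + 1)! = (1 - k / (n + 1)) / ((n + 1 - k)! * k!)`.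
-/

/-- The m-th homotopy-derivative: 𝒟ₘ(g) = g⁽ᵐ⁾(0) / m!. -/
noncomputable def homotopyDeriv (m : ℕ) (g : ℝ → ℝ) : ℝ :=
  iteratedDeriv m g 0 / m.factorial

theorem homotopy_deriv_exp_recursion
    (φ : ℝ → ℝ) (hφ : AnalyticAt ℝ φ 0) (α : ℝ) :
    homotopyDeriv 0 (fun q => Real.exp (α * φ q)) = Real.exp (α * φ 0) ∧
    ∀ m : ℕ, 1 ≤ m →
      homotopyDeriv m (fun q => Real.exp (α * φ q)) =
        α * ∑ k ∈ Finset.range m,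
          (1 - (k : ℝ) / m) * homotopyDeriv (m - k) φ *
            homotopyDeriv k (fun q => Real.exp (α * φ q)) := by
  refine ⟨by simp [homotopyDeriv], fun m hm => ?_⟩
  obtain ⟨n, rfl⟩ : ∃ n, m = n + 1 := ⟨m - 1, by omega⟩
  set E : ℝ → ℝ := fun q => Real.exp (α * φ q) with hE
  have hEan : AnalyticAt ℝ E 0 := (analyticAt_const.mul hφ).rexp
  have hode : deriv E =ᶠ[nhds 0] fun q => α * (E * deriv φ) q := by
    filter_upwards [hφ.eventually_analyticAt] with q hq
    have h := ((hq.differentiableAt.hasDerivAt.const_mul α).exp).deriv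
    simp only [hE, Pi.mul_apply]
    rw [h]
    ring
  have hleib : iteratedDeriv (n + 1) E 0 =
      α * ∑ k ∈ Finset.range (n + 1),
        n.choose k * iteratedDeriv k E 0 * iteratedDeriv (n - k) (deriv φ) 0 := by
    rw [iteratedDeriv_succ', hode.iteratedDeriv_eq, iteratedDeriv_const_mul_field,
      iteratedDeriv_mul hEan.contDiffAt hφ.deriv.contDiffAt]
  unfold homotopyDeriv
  rw [hleib, mul_div_assoc, Finset.sum_div]
  congr 1
  refine Finset.sum_congr rfl fun k hk => ?_
  obtain ⟨j, rfl⟩ : ∃ j, n = k + j := ⟨n - k, by have := Finset.mem_range.mp hk; omega⟩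
  have h1 : k + j - k = j := by omega
  have h2 : k + j + 1 - k = j + 1 := by omega
  rw [h1, h2, ← iteratedDeriv_succ', Nat.cast_add_choose, Nat.factorial_succ (k + j),
    Nat.factorial_succ j]
  have hk0 : (k.factorial : ℝ) ≠ 0 := by positivity
  have hj0 : (j.factorial : ℝ) ≠ 0 := by positivity
  have hkj0 : ((k + j).factorial : ℝ) ≠ 0 := by positivity
  have hs : (k : ℝ) + j + 1 ≠ 0 := by positivity
  have ht : (j : ℝ) + 1 ≠ 0 := by positivity
  push_cast
  field_simp
  ring
end

section
/- Let φ : ℝ → ℝ be analytic at 0. Set uₖ := 𝒟ₖ(φ), Sₖ := 𝒟ₖ(q ↦ sin(φ(q))) and Cₖ := 𝒟ₖ(q ↦ cos(φ(q))). Then S₀ = sin(φ(0)), and for every integer m ≥ 1, S_m = ∑_{k=0}^{m−1} (1 − k/m)·u_{m−k}·Cₖ. -/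
theorem homotopy_deriv_sin_recursion
    (φ : ℝ → ℝ) (hφ : AnalyticAt ℝ φ 0) :
    homotopyDeriv 0 (fun q => Real.sin (φ q)) = Real.sin (φ 0) ∧
    ∀ m : ℕ, 1 ≤ m →
      homotopyDeriv m (fun q => Real.sin (φ q)) =
        ∑ k ∈ Finset.range m,
          (1 - (k : ℝ) / m) * homotopyDeriv (m - k) φ *
            homotopyDeriv k (fun q => Real.cos (φ q)) := by
  refine ⟨by simp [homotopyDeriv], fun m hm => ?_⟩
  obtain ⟨n, rfl⟩ : ∃ n, m = n + 1 := ⟨m - 1, by omega⟩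
  have hcos : AnalyticAt ℝ (fun q => Real.cos (φ q)) 0 := Real.analyticAt_cos.comp hφ
  -- The chain rule is available only near 0, which suffices for derivatives at 0.
  have hchain : deriv (fun q => Real.sin (φ q)) =ᶠ[nhds 0]
      (fun q => Real.cos (φ q)) * deriv φ := by
    filter_upwards [hφ.eventually_analyticAt] with q hq
    exact hq.differentiableAt.hasDerivAt.sin.deriv
  unfold homotopyDeriv
  rw [iteratedDeriv_succ', hchain.iteratedDeriv_eq,
    iteratedDeriv_mul hcos.contDiffAt hφ.deriv.contDiffAt, Finset.sum_div]
  refine Finset.sum_congr rfl fun i hi => ?_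
  obtain ⟨j, rfl⟩ : ∃ j, n = i + j := Nat.exists_eq_add_of_le (by grind)
  rw [← iteratedDeriv_succ', show i + j - i + 1 = j + 1 by omega,
    show i + j + 1 - i = j + 1 by omega, Nat.cast_add_choose, Nat.factorial_succ (i + j),
    Nat.factorial_succ j]
  have hi0 : (i.factorial : ℝ) ≠ 0 := by positivity
  have hj0 : (j.factorial : ℝ) ≠ 0 := by positivity
  have hij0 : ((i + j).factorial : ℝ) ≠ 0 := by positivity
  have hj1 : (j : ℝ) + 1 ≠ 0 := by positivity
  have hij1 : (i : ℝ) + j + 1 ≠ 0 := by positivity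
  push_cast
  field_simp
  ring
end

section
/- Let φ : ℝ → ℝ be analytic at 0 and let f : ℝ → ℝ be analytic at φ(0). Set uₖ := 𝒟ₖ(φ), Fₖ := 𝒟ₖ(q ↦ f(φ(q))) and Gₖ := 𝒟ₖ(q ↦ f′(φ(q))), where f′ denotes the derivative of f. Then F₀ = f(φ(0)), and for every integer m ≥ 1, F_m = ∑_{k=0}^{m−1} (1 − k/m)·u_{m−k}·Gₖ. -/
theorem homotopy_deriv_composition_recursion
    (φ : ℝ → ℝ) (hφ : AnalyticAt ℝ φ 0)
    (f : ℝ → ℝ) (hf : AnalyticAt ℝ f (φ 0)) :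
    homotopyDeriv 0 (fun q => f (φ q)) = f (φ 0) ∧
    ∀ m : ℕ, 1 ≤ m →
      homotopyDeriv m (fun q => f (φ q)) =
        ∑ k ∈ Finset.range m,
          (1 - (k : ℝ) / m) * homotopyDeriv (m - k) φ *
            homotopyDeriv k (fun q => deriv f (φ q)) := by
  refine ⟨by simp [homotopyDeriv], fun m hm => ?_⟩
  obtain ⟨n, rfl⟩ : ∃ n, m = n + 1 := ⟨m - 1, by omega⟩
  have hchain : deriv (fun q => f (φ q)) =ᶠ[nhds 0]
      (fun q => deriv f (φ q)) * deriv φ := by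
    filter_upwards [hφ.eventually_analyticAt,
      hφ.continuousAt.eventually hf.eventually_analyticAt] with q hq hfq
    exact deriv_comp q hfq.differentiableAt hq.differentiableAt
  have hG : AnalyticAt ℝ (fun q => deriv f (φ q)) 0 := hf.deriv.comp hφ
  unfold homotopyDeriv
  rw [iteratedDeriv_succ', hchain.iteratedDeriv_eq n,
    iteratedDeriv_mul hG.contDiffAt hφ.deriv.contDiffAt, Finset.sum_div]
  refine Finset.sum_congr rfl fun k hk => ?_
  obtain ⟨j, rfl⟩ : ∃ j, n = k + j :=
    ⟨n - k, by have := Finset.mem_range.mp hk; omega⟩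
  have h1 : k + j + 1 - k = j + 1 := by omega
  have h2 : k + j - k = j := by omega
  rw [h1, h2, ← iteratedDeriv_succ', Nat.cast_choose ℝ (Nat.le_add_right k j), h2,
    Nat.factorial_succ, Nat.factorial_succ]
  have hk0 : (k.factorial : ℝ) ≠ 0 := by positivity
  have hj0 : (j.factorial : ℝ) ≠ 0 := by positivity
  have hkj0 : ((k + j).factorial : ℝ) ≠ 0 := by positivity
  have hj1 : (j : ℝ) + 1 ≠ 0 := by positivity
  have hn1 : (k : ℝ) + j + 1 ≠ 0 := by positivity
  push_cast
  field_simp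
  ring
end
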